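/- Let H = (V,E) be a hypertree with |e| prime for every e ∈ E, with a fixed edge ordering e₁,…,e_k satisfying |(e₁∪⋯∪e_i) ∩ e_{i+1}| = 1 and fixed cyclic permutations c_i : e_i → e_i. Then X_H = Σ_{π ∈ S_V} F_{Des_H(π)}, where Des_H(π) is the set of H-descents of π. -/

import Mathlib

/-- A path in the hypergraph with edge set `E`: a sequence
`v₀, e₀, v₁, e₁, …, e_{m-1}, v_m` with distinct edges `eᵢ ∈ E`, distinct vertices
(except that the first and last vertex may coincide), and `vᵢ, vᵢ₊₁ ∈ eᵢ`. -/
structure HPath {V : Type} (E : Set (Set V)) where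
  m : ℕ
  vert : Fin (m + 1) → V
  edge : Fin m → Set V
  edge_mem : ∀ i, edge i ∈ E
  edge_inj : Function.Injective edge
  vert_almost_inj : ∀ i j : Fin (m + 1), vert i = vert j →
    i = j ∨ (i = 0 ∧ j = Fin.last m) ∨ (j = 0 ∧ i = Fin.last m)
  mem_left : ∀ i : Fin m, vert i.castSucc ∈ edge i
  mem_right : ∀ i : Fin m, vert i.succ ∈ edge i

/-- The first vertex of a path. -/
def HPath.first {V : Type} {E : Set (Set V)} (p : HPath E) : V := p.vert 0

/-- The last vertex of a path. -/
def HPath.last {V : Type} {E : Set (Set V)} (p : HPath E) : V := p.vert (Fin.last p.m)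

/-- A cycle is a path with `v₀ = v_m` and more than one edge. -/
def HPath.IsCycle {V : Type} {E : Set (Set V)} (p : HPath E) : Prop :=
  p.first = p.last ∧ 1 < p.m

/-- The hypergraph with edge set `E` is connected on the vertex set `W`. -/
def ConnectedOn {V : Type} (W : Set V) (E : Set (Set V)) : Prop :=
  ∀ v ∈ W, ∀ v' ∈ W, ∃ p : HPath E, p.first = v ∧ p.last = v'

/-- `(W, E)` is a hypertree: every edge is a subset of `W` of size at least 2,
the hypergraph is connected on `W`, and it has no cycles. -/
def IsHypertreeOn {V : Type} (W : Set V) (E : Set (Set V)) : Prop :=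
  (∀ e ∈ E, e ⊆ W ∧ 2 ≤ e.ncard) ∧ ConnectedOn W E ∧ ∀ p : HPath E, ¬ p.IsCycle

open Classical in
/-- The power sum symmetric function `p_i = x₁^i + x₂^i + ⋯` (variables indexed by `ℕ`),
as a multivariate power series: the coefficient of a monomial `d` is 1 iff `d = x_j^i`. -/
noncomputable def powerSum (i : ℕ) : MvPowerSeries ℕ ℚ :=
  fun d => if ∃ j, d = Finsupp.single j i then 1 else 0

/-- The fundamental quasisymmetric function `F_S` of degree `n` (0-indexed descent
positions `S ⊆ {0, …, n-2}`): the coefficient of a monomial `d` is the number of weakly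
increasing sequences `g : Fin n → ℕ`, strictly increasing from position `i` to `i+1`
for `i ∈ S`, whose content is `d`. -/
noncomputable def funF (n : ℕ) (S : Set ℕ) : MvPowerSeries ℕ ℚ :=
  fun d => (Nat.card {g : Fin n → ℕ //
    (∀ i : ℕ, ∀ h : i + 1 < n,
      g ⟨i, Nat.lt_of_succ_lt h⟩ ≤ g ⟨i + 1, h⟩ ∧
      (i ∈ S → g ⟨i, Nat.lt_of_succ_lt h⟩ < g ⟨i + 1, h⟩)) ∧
    ∀ j : ℕ, d j = Nat.card {t : Fin n // g t = j}} : ℚ)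

/-- The chromatic symmetric function of the hypergraph with edge set `E` on the
finite vertex type `V`: the coefficient of a monomial `d` is the number of colorings
`χ : V → ℕ` with no edge monochromatic and content `d`. -/
noncomputable def chromSym {V : Type} [Fintype V] (E : Set (Set V)) :
    MvPowerSeries ℕ ℚ :=
  fun d => (Nat.card {χ : V → ℕ //
    (∀ e ∈ E, ¬ ∃ a, ∀ v ∈ e, χ v = a) ∧
    ∀ j : ℕ, d j = Nat.card {v : V // χ v = j}} : ℚ)

/-- The set of `H`-descents of a labeling `π : V ≃ Fin n`, with respect to the edge
enumeration `f : Fin k → Set V` and cyclic permutations `c i` of the edges `f i`: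
`i` is an `H`-descent if, along the (unique) path
`π⁻¹(i) = v₀, e_{j₀}, v₁, …, e_{j_{l-1}}, v_l = π⁻¹(i+1)`, with `j_r` minimal among
the edge indices, one has `π (c_{j_r} (v_r)) > π (c_{j_r} (v_{r+1}))`. -/
def DesH {V : Type} {k : ℕ} (f : Fin k → Set V) (c : Fin k → Equiv.Perm V)
    {n : ℕ} (π : V ≃ Fin n) : Set ℕ :=
  {i | ∃ h : i + 1 < n, ∃ p : HPath (Set.range f),
    p.first = π.symm ⟨i, Nat.lt_of_succ_lt h⟩ ∧ p.last = π.symm ⟨i + 1, h⟩ ∧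
    ∃ idx : Fin p.m → Fin k, (∀ s, f (idx s) = p.edge s) ∧
      ∃ r : Fin p.m, (∀ s, idx r ≤ idx s) ∧
        π (c (idx r) (p.vert r.succ)) < π (c (idx r) (p.vert r.castSucc))}

/-!
In a hypertree every vertex `v` has a unique gate in each edge `e`: the vertex of `e` to which `v`
stays connected when `e` is deleted. The path from `v` to `w` uses exactly the edges in which the
gates of `v` and `w` differ, and it crosses such an edge from one gate to the other. Hence `i` is an
`H`-descent of `π` iff `π⁻¹(i+1)` precedes `π⁻¹(i)` in the lexicographic order of the vectors
`(π (c_j (gate of v in e_j)))_j`, and `F_{Des_H(π)}` counts the colorings `χ` for which `π` sorts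
the vertices by the key `(χ v, (π (c_j (gate of v in e_j)))_j)`.

On an edge `e_j` this condition reads `π x < π y ↔ χ x < χ y ∨ χ x = χ y ∧ π (c_j x) < π (c_j y)`,
which unrolls to the lexicographic comparison of the itineraries `χ x, χ (c_j x), χ (c_j² x), …`.
So the labels `π` in the key can be replaced by itineraries. The new key depends on `χ` alone;
therefore `χ` is counted once if the key is injective and not at all otherwise. Since `|e_j|` is
prime, two itineraries on `e_j` coincide only if `χ` is constant on `e_j`, so injectivity of the key
means that `χ` is proper.
-/

theorem toLex_lt_toLex_iff_of_ne {α β : Type*} [PartialOrder α] [LinearOrder β] {a a' : α}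
    {b b' : β} (hne : b ≠ b') :
    toLex (a, b) < toLex (a', b') ↔ a ≤ a' ∧ (b' < b → a < a') := by
  rw [Prod.Lex.toLex_lt_toLex']
  refine and_congr_right fun hle => ⟨fun h hlt => ?_, fun h heq => ?_⟩
  · exact hle.lt_of_ne fun heq => (h heq).asymm hlt
  · exact hne.lt_or_gt.resolve_right fun hlt => (h hlt).ne heq

theorem strictMono_fin_iff_lt_succ {α : Type*} [Preorder α] {n : ℕ} {g : Fin n → α} :
    StrictMono g ↔ ∀ i (hi : i + 1 < n), g ⟨i, Nat.lt_of_succ_lt hi⟩ < g ⟨i + 1, hi⟩ := by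
  cases n with
  | zero => exact iff_of_true (Subsingleton.strictMono g) fun _ hi => absurd hi (Nat.not_lt_zero _)
  | succ n =>
    rw [Fin.strictMono_iff_lt_succ, Fin.forall_iff]
    exact forall_congr' fun i => ⟨fun h hi => h (Nat.lt_of_succ_lt_succ hi),
      fun h hi => h (Nat.succ_lt_succ hi)⟩

theorem card_subtype_and_eq_sum {α β : Type*} [Fintype β] {P Q : α → Prop} {R : β → α → Prop}
    (hQ : {a | Q a}.Finite) (hP : ∀ a, P a ↔ ∃ b, R b a)
    (hR : ∀ a b b', R b a → R b' a → b = b') :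
    Nat.card {a // P a ∧ Q a} = ∑ b, Nat.card {a // R b a ∧ Q a} := by
  have hfin (b : β) : Finite {a // R b a ∧ Q a} := hQ.subset fun _ h => h.2
  rw [← Nat.card_sigma]
  refine (Nat.card_congr (.ofBijective
    (fun x => ⟨x.2, (hP _).2 ⟨x.1, x.2.2.1⟩, x.2.2.2⟩) ⟨?_, ?_⟩)).symm
  · rintro ⟨b, a, hb, ha⟩ ⟨b', a', hb', ha'⟩ h
    obtain rfl : a = a' := congrArg Subtype.val h
    obtain rfl := hR a b b' hb hb'
    rfl
  · rintro ⟨a, hPa, ha⟩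
    obtain ⟨b, hb⟩ := (hP a).1 hPa
    exact ⟨⟨b, a, hb, ha⟩, rfl⟩

theorem walk_getVert_le_of_adj {V : Type*} {G : SimpleGraph V} {x y : V} {p : G.Walk x y}
    (hp : p.length = G.dist x y) {i j : ℕ} (hj : j ≤ p.length)
    (hadj : G.Adj (p.getVert i) (p.getVert j)) : j ≤ i + 1 := by
  have := SimpleGraph.dist_le (((p.take i).concat hadj).append (p.drop j))
  simp only [SimpleGraph.Walk.length_append, SimpleGraph.Walk.length_concat,
    SimpleGraph.Walk.take_length, SimpleGraph.Walk.drop_length] at this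
  omega

variable {V : Type} {W : Set V} {E : Set (Set V)} {e : Set V}

/-- The primal graph (2-section) of a hypergraph: two distinct vertices are adjacent when some
edge contains both. -/
def primalGraph (E : Set (Set V)) : SimpleGraph V where
  Adj x y := x ≠ y ∧ ∃ e ∈ E, x ∈ e ∧ y ∈ e
  symm := ⟨fun _ _ ⟨hne, e, he, hx, hy⟩ => ⟨hne.symm, e, he, hy, hx⟩⟩
  loopless := ⟨fun _ h => h.1 rfl⟩

theorem primalGraph_reachable_of_mem (he : e ∈ E) {x y : V} (hx : x ∈ e) (hy : y ∈ e) :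
    (primalGraph E).Reachable x y := by
  by_cases hxy : x = y
  · exact hxy ▸ .rfl
  · exact SimpleGraph.Adj.reachable ⟨hxy, e, he, hx, hy⟩

-- The edges of a shortest walk are distinct, since a repeated edge would be a shortcut.
theorem exists_hpath_of_reachable {x y : V} (h : (primalGraph E).Reachable x y) :
    ∃ p : HPath E, p.first = x ∧ p.last = y ∧ Function.Injective p.vert := by
  obtain ⟨w, hw, hlen⟩ := h.exists_path_of_dist
  choose edge edge_mem mem_left mem_right using
    fun i : Fin w.length => (w.adj_getVert_succ i.2).2
  have vert_inj : Function.Injective fun i : Fin (w.length + 1) => w.getVert i := fun i j hij =>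
    Fin.ext (hw.getVert_injOn (Nat.le_of_lt_succ i.2) (Nat.le_of_lt_succ j.2) hij)
  have edge_le {i j : Fin w.length} (hij : edge i = edge j) : j ≤ i := by
    by_contra! hlt
    have hne : w.getVert i ≠ w.getVert (j + 1) := fun h =>
      (Nat.lt_succ_of_lt hlt).ne (Fin.mk.inj (@vert_inj i.castSucc j.succ h))
    have := walk_getVert_le_of_adj hlen (Nat.succ_le_of_lt j.2)
      ⟨hne, edge i, edge_mem i, mem_left i, hij ▸ mem_right j⟩
    omega
  exact ⟨⟨w.length, fun i => w.getVert i, edge, edge_mem,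
    fun i j hij => (edge_le hij.symm).antisymm (edge_le hij),
    fun i j hij => .inl (vert_inj hij), mem_left, mem_right⟩, w.getVert_zero,
    w.getVert_length, vert_inj⟩

namespace HPath

theorem exists_isCycle_of_first_mem_of_last_mem (he : e ∈ E) (p : HPath (E \ {e}))
    (hinj : Function.Injective p.vert) (hfirst : p.first ∈ e) (hlast : p.last ∈ e)
    (hne : p.first ≠ p.last) : ∃ q : HPath E, q.IsCycle := by
  have hm : p.m ≠ 0 := fun h => hne (congrArg p.vert (Fin.ext (by simp [h])))
  refine ⟨⟨p.m + 1, Fin.snoc p.vert p.first, Fin.snoc p.edge e, ?_, ?_, ?_, ?_, ?_⟩, ?_, ?_⟩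
  · exact Fin.lastCases (by simpa using he) fun i => by simpa using (p.edge_mem i).1
  · refine Fin.snoc_injective_iff.2 ⟨p.edge_inj, ?_⟩
    rintro ⟨i, hi⟩
    exact (p.edge_mem i).2 hi
  · refine Fin.lastCases (Fin.lastCases (by simp) fun j h => ?_) fun i =>
      Fin.lastCases (fun h => ?_) fun j h => ?_
    · simp only [Fin.snoc_last, Fin.snoc_castSucc] at h
      exact .inr (.inr ⟨congrArg Fin.castSucc (hinj h.symm), rfl⟩)
    · simp only [Fin.snoc_last, Fin.snoc_castSucc] at h
      exact .inr (.inl ⟨congrArg Fin.castSucc (hinj h), rfl⟩)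
    · simp only [Fin.snoc_castSucc] at h
      exact .inl (congrArg Fin.castSucc (hinj h))
  · exact Fin.lastCases (by simpa using! hlast) fun i => by simpa using p.mem_left i
  · refine Fin.lastCases (by simpa using hfirst) fun i => ?_
    rw [Fin.succ_castSucc, Fin.snoc_castSucc, Fin.snoc_castSucc]
    exact p.mem_right i
  · simp [HPath.first, HPath.last]
  · simpa using Nat.pos_of_ne_zero hm

theorem vert_castSucc_ne_vert_succ (p : HPath E) (hne : p.first ≠ p.last) (r : Fin p.m) :
    p.vert r.castSucc ≠ p.vert r.succ := by
  intro h
  rcases p.vert_almost_inj _ _ h with heq | ⟨hzero, hlast⟩ | ⟨hzero, -⟩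
  · exact Fin.castSucc_lt_succ.ne heq
  · rw [hzero, hlast] at h
    exact hne h
  · exact Fin.succ_ne_zero r hzero

end HPath

theorem injOn_connectedComponentMk (hE : ∀ p : HPath E, ¬ p.IsCycle) (he : e ∈ E) :
    Set.InjOn (primalGraph (E \ {e})).connectedComponentMk e := by
  intro x hx y hy hxy
  by_contra hne
  obtain ⟨p, rfl, rfl, hinj⟩ := exists_hpath_of_reachable (SimpleGraph.ConnectedComponent.exact hxy)
  obtain ⟨q, hq⟩ := p.exists_isCycle_of_first_mem_of_last_mem he hinj hx hy hne
  exact hE q hq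

/-- The gate of `v` in the edge `e` of a hypertree: the unique vertex of `e` that is still
connected to `v` once `e` is deleted. If there is no such vertex, `Function.invFunOn` makes an
arbitrary choice. -/
noncomputable def gate (E : Set (Set V)) (e : Set V) (v : V) : V :=
  haveI : Nonempty V := ⟨v⟩
  Function.invFunOn (primalGraph (E \ {e})).connectedComponentMk e
    ((primalGraph (E \ {e})).connectedComponentMk v)

theorem gate_eq_gate_of_mem {e' : Set V} (he' : e' ∈ E) (hne : e' ≠ e) {x y : V} (hx : x ∈ e')
    (hy : y ∈ e') : gate E e x = gate E e y := by
  have hmem : e' ∈ E \ {e} := ⟨he', hne⟩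
  have hxy := primalGraph_reachable_of_mem hmem hx hy
  simp only [gate, SimpleGraph.ConnectedComponent.sound hxy]

theorem HPath.gate_vert_eq_gate_vert (p : HPath E) {a b : Fin (p.m + 1)} (hab : a ≤ b)
    (h : ∀ s : Fin p.m, a ≤ s.castSucc → s.succ ≤ b → p.edge s ≠ e) :
    gate E e (p.vert a) = gate E e (p.vert b) := by
  induction b using Fin.induction with
  | zero => rw [Fin.le_zero_iff.1 hab]
  | succ b ih =>
    rcases hab.eq_or_lt with rfl | hlt
    · rfl
    have hab' : a ≤ b.castSucc := Fin.le_castSucc_iff.2 hlt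
    exact (ih hab' fun s ha hs => h s ha (hs.trans Fin.castSucc_lt_succ.le)).trans
      (gate_eq_gate_of_mem (p.edge_mem b) (h b hab' le_rfl) (p.mem_left b) (p.mem_right b))

namespace IsHypertreeOn

theorem nonempty_of_mem (hT : IsHypertreeOn W E) (he : e ∈ E) : e.Nonempty :=
  Set.nonempty_of_ncard_ne_zero (by have := (hT.1 e he).2; omega)

theorem gate_eq_self (hT : IsHypertreeOn W E) (he : e ∈ E) {x : V} (hx : x ∈ e) :
    gate E e x = x :=
  haveI : Nonempty V := ⟨x⟩
  (injOn_connectedComponentMk hT.2.2 he).leftInvOn_invFunOn hx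

theorem gate_mem (hT : IsHypertreeOn W E) (he : e ∈ E) {v : V} (hv : v ∈ W) :
    gate E e v ∈ e := by
  obtain ⟨x, hx⟩ := hT.nonempty_of_mem he
  obtain ⟨p, hfirst, rfl⟩ := hT.2.1 x ((hT.1 e he).1 hx) v hv
  have gate_vert_mem (s : Fin (p.m + 1)) : gate E e (p.vert s) ∈ e := by
    induction s using Fin.induction with
    | zero =>
      change gate E e p.first ∈ e
      rwa [hfirst, hT.gate_eq_self he hx]
    | succ s ih =>
      by_cases hs : p.edge s = e
      · have hmem : p.vert s.succ ∈ e := hs ▸ p.mem_right s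
        rwa [hT.gate_eq_self he hmem]
      · rwa [← gate_eq_gate_of_mem (p.edge_mem s) hs (p.mem_left s) (p.mem_right s)]
  exact gate_vert_mem _

theorem gate_first (hT : IsHypertreeOn W E) (p : HPath E) (r : Fin p.m) :
    gate E (p.edge r) p.first = p.vert r.castSucc := by
  rw [← hT.gate_eq_self (p.edge_mem r) (p.mem_left r)]
  refine p.gate_vert_eq_gate_vert (Fin.zero_le _) fun s _ hs h => ?_
  exact (Fin.castSucc_lt_succ.trans_le (p.edge_inj h ▸ hs)).false

theorem gate_last (hT : IsHypertreeOn W E) (p : HPath E) (r : Fin p.m) :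
    gate E (p.edge r) p.last = p.vert r.succ := by
  rw [← hT.gate_eq_self (p.edge_mem r) (p.mem_right r)]
  refine (p.gate_vert_eq_gate_vert (Fin.le_last _) fun s hs _ h => ?_).symm
  exact (Fin.castSucc_lt_succ.trans_le (p.edge_inj h ▸ hs)).false

theorem gate_first_ne_gate_last_iff (hT : IsHypertreeOn W E) {p : HPath E}
    (hne : p.first ≠ p.last) :
    gate E e p.first ≠ gate E e p.last ↔ ∃ r, p.edge r = e := by
  constructor
  · contrapose!
    exact fun h => p.gate_vert_eq_gate_vert (Fin.zero_le _) fun s _ _ => h s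
  · rintro ⟨r, rfl⟩
    rw [hT.gate_first, hT.gate_last]
    exact p.vert_castSucc_ne_vert_succ hne r

theorem exists_gate_ne_gate (hT : IsHypertreeOn W E) {v w : V} (hv : v ∈ W) (hw : w ∈ W)
    (hne : v ≠ w) : ∃ e ∈ E, gate E e v ≠ gate E e w := by
  obtain ⟨p, rfl, rfl⟩ := hT.2.1 v hv w hw
  have hm : p.m ≠ 0 := fun h => hne (congrArg p.vert (Fin.ext (by simp [h])))
  let r : Fin p.m := ⟨0, Nat.pos_of_ne_zero hm⟩
  exact ⟨p.edge r, p.edge_mem r, (hT.gate_first_ne_gate_last_iff hne).2 ⟨r, rfl⟩⟩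

end IsHypertreeOn

section GateKey

variable {ι α β : Type*} {f : ι → Set V} {φ : ι → V → α} {v w : V}

/-- The vector of labels `φ j` of the gates of `v` in the edges `f j`, ordered lexicographically in
the edge index. -/
noncomputable def gateKey (f : ι → Set V) (φ : ι → V → α) (v : V) : Lex (ι → α) :=
  toLex fun j => φ j (gate (Set.range f) (f j) v)

theorem gateKey_injective (hT : IsHypertreeOn Set.univ (Set.range f))
    (hφ : ∀ j, Set.InjOn (φ j) (f j)) : Function.Injective (gateKey f φ) := by
  intro v w h
  by_contra hne
  obtain ⟨_, ⟨j, rfl⟩, hj⟩ := hT.exists_gate_ne_gate (Set.mem_univ v) (Set.mem_univ w) hne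
  exact hj (hφ j (hT.gate_mem ⟨j, rfl⟩ (Set.mem_univ v)) (hT.gate_mem ⟨j, rfl⟩ (Set.mem_univ w))
    (congrFun (toLex.injective h) j))

theorem gateKey_lt_gateKey_iff_of_mem [LinearOrder ι] [Preorder α]
    (hT : IsHypertreeOn W (Set.range f)) (hf : Function.Injective f)
    {j : ι} (hv : v ∈ f j) (hw : w ∈ f j) :
    gateKey f φ v < gateKey f φ w ↔ φ j v < φ j w := by
  have gate_eq {i : ι} (hij : i ≠ j) :
      φ i (gate (Set.range f) (f i) v) = φ i (gate (Set.range f) (f i) w) :=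
    congrArg (φ i) (gate_eq_gate_of_mem (Set.mem_range_self j) (hf.ne hij.symm) hv hw)
  have hself : φ j (gate (Set.range f) (f j) v) < φ j (gate (Set.range f) (f j) w) ↔
      φ j v < φ j w := by
    rw [hT.gate_eq_self ⟨j, rfl⟩ hv, hT.gate_eq_self ⟨j, rfl⟩ hw]
  rw [← hself]
  constructor
  · rintro ⟨i, -, hi⟩
    rcases eq_or_ne i j with rfl | hij
    · exact hi
    · exact absurd (gate_eq hij) hi.ne
  · exact fun h => ⟨j, fun i hi => gate_eq hi.ne, h⟩

theorem gateKey_lt_gateKey_congr [LT ι] [LinearOrder α] [LinearOrder β]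
    (hT : IsHypertreeOn Set.univ (Set.range f)) {ψ : ι → V → β}
    (h : ∀ j, ∀ x ∈ f j, ∀ y ∈ f j, φ j x < φ j y ↔ ψ j x < ψ j y) :
    gateKey f φ v < gateKey f φ w ↔ gateKey f ψ v < gateKey f ψ w := by
  have lt_iff (j : ι) (x y : V) :=
    h j _ (hT.gate_mem (Set.mem_range_self j) (Set.mem_univ x)) _
      (hT.gate_mem (Set.mem_range_self j) (Set.mem_univ y))
  have eq_iff (j : ι) : gateKey f φ v j = gateKey f φ w j ↔
      gateKey f ψ v j = gateKey f ψ w j := by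
    rw [le_antisymm_iff, le_antisymm_iff, ← not_lt, ← not_lt, ← not_lt, ← not_lt]
    exact and_congr (lt_iff j w v).not (lt_iff j v w).not
  exact exists_congr fun j =>
    and_congr (forall₂_congr fun i _ => eq_iff i) (lt_iff j v w)

theorem IsHypertreeOn.gateKey_last_lt_gateKey_first_iff [LinearOrder ι] [Preorder α]
    (hT : IsHypertreeOn Set.univ (Set.range f)) (hf : Function.Injective f)
    (hφ : ∀ j, Set.InjOn (φ j) (f j)) {p : HPath (Set.range f)} (hne : p.first ≠ p.last)
    {idx : Fin p.m → ι} (hidx : ∀ s, f (idx s) = p.edge s) :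
    gateKey f φ p.last < gateKey f φ p.first ↔ ∃ r : Fin p.m, (∀ s, idx r ≤ idx s) ∧
      φ (idx r) (p.vert r.succ) < φ (idx r) (p.vert r.castSucc) := by
  have label_eq_iff (j : ι) : gateKey f φ p.last j = gateKey f φ p.first j ↔ ∀ s, idx s ≠ j := by
    have hgate := hT.gate_first_ne_gate_last_iff (e := f j) hne
    simp only [← hidx, hf.eq_iff, ← not_iff_not (b := ∃ _, _), not_exists, not_not] at hgate
    rw [← hgate, eq_comm]
    exact (hφ j).eq_iff (hT.gate_mem ⟨j, rfl⟩ (Set.mem_univ _))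
      (hT.gate_mem ⟨j, rfl⟩ (Set.mem_univ _))
  have label_lt_iff (r : Fin p.m) :
      gateKey f φ p.last (idx r) < gateKey f φ p.first (idx r) ↔
        φ (idx r) (p.vert r.succ) < φ (idx r) (p.vert r.castSucc) := by
    rw [← hT.gate_first, ← hT.gate_last, ← hidx]
    rfl
  constructor
  · rintro ⟨j, heq, hlt⟩
    obtain ⟨r, rfl⟩ : ∃ r, idx r = j := by
      simpa using (label_eq_iff j).not.1 hlt.ne
    refine ⟨r, fun s => ?_, (label_lt_iff r).1 hlt⟩
    by_contra! hs
    exact (label_eq_iff _).1 (heq _ hs) s rfl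
  · rintro ⟨_, hmin, hlt⟩
    exact ⟨_, fun i hi => (label_eq_iff i).2 fun s hs => (hmin s).not_gt (hs ▸ hi),
      (label_lt_iff _).2 hlt⟩

end GateKey

theorem mem_DesH_iff_gateKey_lt {k n : ℕ} {f : Fin k → Set V}
    (hT : IsHypertreeOn Set.univ (Set.range f)) (hf : Function.Injective f)
    (c : Fin k → Equiv.Perm V) (π : V ≃ Fin n) {i : ℕ} (hi : i + 1 < n) :
    i ∈ DesH f c π ↔ gateKey f (fun j => π ∘ c j) (π.symm ⟨i + 1, hi⟩) <
      gateKey f (fun j => π ∘ c j) (π.symm ⟨i, Nat.lt_of_succ_lt hi⟩) := by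
  have hinj (j : Fin k) : Set.InjOn (π ∘ c j) (f j) := (π.injective.comp (c j).injective).injOn
  have hne : π.symm ⟨i, Nat.lt_of_succ_lt hi⟩ ≠ π.symm ⟨i + 1, hi⟩ :=
    π.symm.injective.ne (by simp)
  constructor
  · rintro ⟨_, p, hfirst, hlast, idx, hidx, hdes⟩
    rw [← hfirst, ← hlast] at hne ⊢
    exact (hT.gateKey_last_lt_gateKey_first_iff hf hinj hne hidx).2 hdes
  · intro hlt
    obtain ⟨p, hfirst, hlast⟩ := hT.2.1 _ (Set.mem_univ (π.symm ⟨i, Nat.lt_of_succ_lt hi⟩)) _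
      (Set.mem_univ (π.symm ⟨i + 1, hi⟩))
    choose idx hidx using p.edge_mem
    refine ⟨hi, p, hfirst, hlast, idx, hidx, ?_⟩
    rw [← hfirst, ← hlast] at hne hlt
    exact (hT.gateKey_last_lt_gateKey_first_iff hf hinj hne hidx).1 hlt

section IsSortedBy

variable {A α : Type*} {n : ℕ} {key : A → α} {π : A ≃ Fin n}

/-- The labeling `π` numbers the elements of `A` in the order of strictly increasing `key`. -/
def IsSortedBy [Preorder α] (π : A ≃ Fin n) (key : A → α) : Prop :=
  StrictMono (key ∘ π.symm)

theorem isSortedBy_iff [Preorder α] :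
    IsSortedBy π key ↔ ∀ x y, π x < π y ↔ key x < key y := by
  constructor
  · intro h x y
    simpa using (h.lt_iff_lt (a := π x) (b := π y)).symm
  · intro h a b hab
    exact (h _ _).1 (by simpa using hab)

theorem IsSortedBy.injective [Preorder α] (h : IsSortedBy π key) : Function.Injective key :=
  (π.symm.injective_comp key).1 (StrictMono.injective h)

theorem IsSortedBy.eq [PartialOrder α] {π' : A ≃ Fin n} (h : IsSortedBy π key)
    (h' : IsSortedBy π' key) : π = π' := by
  have hkey : key ∘ π.symm = key ∘ π'.symm := (h.range_inj h').1 (by simp [Set.range_comp])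
  exact Equiv.symm_bijective.injective (Equiv.coe_fn_injective (h.injective.comp_left hkey))

theorem exists_isSortedBy_iff [Fintype A] [LinearOrder α] (hn : Fintype.card A = n) :
    (∃ π : A ≃ Fin n, IsSortedBy π key) ↔ Function.Injective key := by
  refine ⟨fun ⟨_, h⟩ => h.injective, fun hkey => ?_⟩
  let := LinearOrder.lift' key hkey
  let e := Fintype.orderIsoFinOfCardEq A hn
  exact ⟨e.symm.toEquiv, fun _ _ hab => e.strictMono hab⟩

end IsSortedBy

section Itinerary

variable {A α γ : Type*} {s : Set A} {x y : A}

/-- The itinerary of `x` under `σ`: the word `χ x, χ (σ x), χ (σ² x), …`, words being ordered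
lexicographically. -/
def itinerary (χ : A → γ) (σ : A → A) (x : A) : Lex (ℕ → γ) :=
  toLex fun t => χ (σ^[t] x)

theorem itinerary_lt_itinerary_iff [LT γ] {χ : A → γ} {σ : A → A} :
    itinerary χ σ x < itinerary χ σ y ↔
      χ x < χ y ∨ χ x = χ y ∧ itinerary χ σ (σ x) < itinerary χ σ (σ y) := by
  constructor
  · rintro ⟨_ | t, heq, hlt⟩
    · exact .inl hlt
    · exact .inr ⟨heq 0 t.succ_pos, t, fun i hi => heq (i + 1) (Nat.succ_lt_succ hi), hlt⟩
  · rintro (hlt | ⟨hχ, t, heq, hlt⟩)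
    · exact ⟨0, fun i hi => absurd hi i.not_lt_zero, hlt⟩
    · refine ⟨t + 1, fun i hi => ?_, hlt⟩
      cases i with
      | zero => exact hχ
      | succ i => exact heq i (Nat.lt_of_succ_lt_succ hi)

theorem lt_of_itinerary_lt [LT α] [LT γ] {χ : A → γ} {σ : A → A} {π : A → α}
    (hσ : Set.MapsTo σ s s)
    (hπ : ∀ x ∈ s, ∀ y ∈ s, χ x < χ y ∨ χ x = χ y ∧ π (σ x) < π (σ y) → π x < π y)
    (hx : x ∈ s) (hy : y ∈ s) (h : itinerary χ σ x < itinerary χ σ y) : π x < π y := by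
  obtain ⟨t, heq, hlt⟩ := h
  induction t generalizing x y with
  | zero => exact hπ x hx y hy (.inl hlt)
  | succ t ih =>
    refine hπ x hx y hy (.inr ⟨heq 0 t.succ_pos, ?_⟩)
    exact ih (hσ hx) (hσ hy) (fun i hi => heq (i + 1) (Nat.succ_lt_succ hi)) hlt

-- If `y = σ^r x` has the itinerary of `x`, then `x, σ^r x, σ^(2r) x, …` would be an infinite chain.
theorem itinerary_ne_of_lt [Preorder α] [Preorder γ] {χ : A → γ} {σ : Equiv.Perm A} {π : A → α}
    (hσ : σ.IsCycleOn s) (hs : s.Finite)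
    (hπ : ∀ x ∈ s, ∀ y ∈ s, π x < π y → χ x < χ y ∨ χ x = χ y ∧ π (σ x) < π (σ y))
    (hx : x ∈ s) (hy : y ∈ s) (hxy : π x < π y) : itinerary χ σ x ≠ itinerary χ σ y := by
  intro heq
  have hmem (t : ℕ) {z : A} (hz : z ∈ s) : σ^[t] z ∈ s := hσ.1.mapsTo.iterate t hz
  have hlt (t : ℕ) : π (σ^[t] x) < π (σ^[t] y) := by
    induction t with
    | zero => exact hxy
    | succ t ih =>
      have hχ : χ (σ^[t] x) = χ (σ^[t] y) := congrFun (toLex.injective heq) t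
      simpa [Function.iterate_succ_apply', hχ] using hπ _ (hmem t hx) _ (hmem t hy) ih
  obtain ⟨r, rfl⟩ := hσ.exists_pow_eq' hs hx hy
  have hmono : StrictMono fun q => π (σ^[q * r] x) := strictMono_nat_of_lt_succ fun q => by
    simpa only [Nat.succ_mul, Function.iterate_add_apply, Equiv.Perm.iterate_eq_pow] using
      hlt (q * r)
  have : Finite s := hs
  exact not_injective_infinite_finite (fun q => (⟨σ^[q * r] x, hmem _ hx⟩ : s)) fun a b hab =>
    hmono.injective (congrArg (fun z : s => π z) hab)

theorem lt_iff_itinerary_lt [Preorder α] [LinearOrder γ] {χ : A → γ} {σ : Equiv.Perm A} {π : A → α}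
    (hσ : σ.IsCycleOn s) (hs : s.Finite)
    (hπ : ∀ x ∈ s, ∀ y ∈ s, π x < π y ↔ χ x < χ y ∨ χ x = χ y ∧ π (σ x) < π (σ y))
    (hx : x ∈ s) (hy : y ∈ s) : π x < π y ↔ itinerary χ σ x < itinerary χ σ y := by
  have lt_of_lt {x y : A} (hx : x ∈ s) (hy : y ∈ s) :=
    lt_of_itinerary_lt hσ.1.mapsTo (fun x hx y hy => (hπ x hx y hy).2) hx hy
  refine ⟨fun hlt => ?_, lt_of_lt hx hy⟩
  have hne := itinerary_ne_of_lt hσ hs (fun x hx y hy => (hπ x hx y hy).1) hx hy hlt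
  exact hne.lt_or_gt.resolve_right fun hgt => (lt_of_lt hy hx hgt).asymm hlt

-- A coincidence `itinerary x = itinerary (σ^r x)` makes `χ` invariant under `σ^r`, which acts
-- transitively on `s` because `r` is prime to `|s|`.
theorem injOn_itinerary_of_prime_ncard {χ : A → γ} {σ : Equiv.Perm A} (hσ : σ.IsCycleOn s)
    (hs : s.ncard.Prime) (hχ : ¬ ∃ a, ∀ v ∈ s, χ v = a) : Set.InjOn (itinerary χ σ) s := by
  intro x hx y hy heq
  by_contra hne
  have hfin : s.Finite := Set.finite_of_ncard_ne_zero hs.ne_zero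
  obtain ⟨r, rfl⟩ := hσ.exists_pow_eq' hfin hx hy
  have hinv (t : ℕ) : χ ((σ ^ (t + r)) x) = χ ((σ ^ t) x) := by
    simpa [itinerary, Equiv.Perm.iterate_eq_pow, pow_add] using
      (congrFun (toLex.injective heq) t).symm
  have hinv_mul (q : ℕ) : χ ((σ ^ (r * q)) x) = χ x := by
    induction q with
    | zero => simp
    | succ q ih => rw [Nat.mul_succ, hinv, ih]
  refine hχ ⟨χ x, fun z hz => ?_⟩
  obtain ⟨t, rfl⟩ := hσ.exists_pow_eq' hfin hx hz
  lift s to Finset A using hfin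
  rw [Set.ncard_coe_finset] at hs
  have hcop : r.Coprime s.card :=
    ((hs.coprime_iff_not_dvd).2 fun hdvd => hne ((hσ.pow_apply_eq hx).2 hdvd).symm).symm
  obtain ⟨q, -, hq⟩ := Nat.exists_mul_mod_eq_of_coprime t hcop hs.ne_zero
  rw [← (hσ.pow_apply_eq_pow_apply hx).2 hq, hinv_mul]

end Itinerary

section ColorKey

variable {ι α β γ : Type*} {f : ι → Set V} {c : ι → Equiv.Perm V} {χ : V → γ} {φ : ι → V → α}

/-- The key by which a labeling compatible with the coloring `χ` sorts the vertices: the color of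
`v`, with ties broken by the labels `φ j (c j x)` of the gates `x` of `v` in the edges `f j`. -/
noncomputable def colorKey (f : ι → Set V) (c : ι → Equiv.Perm V) (χ : V → γ) (φ : ι → V → α)
    (v : V) : γ ×ₗ Lex (ι → α) :=
  toLex (χ v, gateKey f (fun j => φ j ∘ c j) v)

theorem colorKey_lt_colorKey_iff_of_mem [LinearOrder ι] [Preorder α] [Preorder γ]
    (hT : IsHypertreeOn W (Set.range f)) (hf : Function.Injective f) {j : ι} {x y : V}
    (hx : x ∈ f j) (hy : y ∈ f j) :
    colorKey f c χ φ x < colorKey f c χ φ y ↔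
      χ x < χ y ∨ χ x = χ y ∧ φ j (c j x) < φ j (c j y) := by
  rw [colorKey, colorKey, Prod.Lex.toLex_lt_toLex, gateKey_lt_gateKey_iff_of_mem hT hf hx hy]
  rfl

theorem colorKey_lt_colorKey_congr [LT ι] [LinearOrder α] [LinearOrder β] [Preorder γ]
    (hT : IsHypertreeOn Set.univ (Set.range f)) (hc : ∀ j, Set.MapsTo (c j) (f j) (f j))
    {ψ : ι → V → β} (h : ∀ j, ∀ x ∈ f j, ∀ y ∈ f j, φ j x < φ j y ↔ ψ j x < ψ j y) (v w : V) :
    colorKey f c χ φ v < colorKey f c χ φ w ↔ colorKey f c χ ψ v < colorKey f c χ ψ w := by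
  simp only [colorKey, Prod.Lex.toLex_lt_toLex]
  exact or_congr_right (and_congr_right fun _ => gateKey_lt_gateKey_congr hT fun j x hx y hy =>
    h j _ (hc j hx) _ (hc j hy))

theorem isSortedBy_colorKey_iff [LinearOrder ι] [Finite V] [LinearOrder γ] {n : ℕ}
    {π : V ≃ Fin n} (hT : IsHypertreeOn Set.univ (Set.range f)) (hf : Function.Injective f)
    (hc : ∀ j, (c j).IsCycleOn (f j)) :
    IsSortedBy π (colorKey f c χ fun _ => π) ↔
      IsSortedBy π (colorKey f c χ fun j => itinerary χ (c j)) := by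
  rw [isSortedBy_iff, isSortedBy_iff]
  have colorKey_congr := colorKey_lt_colorKey_congr (c := c) (χ := χ) (φ := fun _ => π)
    (ψ := fun j => itinerary χ (c j)) hT fun j => (hc j).1.mapsTo
  constructor
  · intro h v w
    refine (h v w).trans (colorKey_congr (fun j x hx y hy => ?_) v w)
    exact lt_iff_itinerary_lt (hc j) (Set.toFinite _)
      (fun x hx y hy => (h x y).trans (colorKey_lt_colorKey_iff_of_mem hT hf hx hy)) hx hy
  · intro h v w
    refine (h v w).trans (colorKey_congr (fun j x hx y hy => ?_) v w).symm
    rw [h, colorKey_lt_colorKey_iff_of_mem hT hf hx hy]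
    exact itinerary_lt_itinerary_iff.symm

theorem injective_colorKey_itinerary_iff [LinearOrder ι] [WellFoundedLT ι] [LinearOrder γ]
    (hT : IsHypertreeOn Set.univ (Set.range f)) (hf : Function.Injective f)
    (hp : ∀ j, (f j).ncard.Prime) (hc : ∀ j, (c j).IsCycleOn (f j)) :
    Function.Injective (colorKey f c χ fun j => itinerary χ (c j)) ↔
      ∀ j, ¬ ∃ a, ∀ v ∈ f j, χ v = a := by
  constructor
  · rintro hinj j ⟨a, ha⟩
    obtain ⟨x, hx⟩ := hT.nonempty_of_mem (Set.mem_range_self j)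
    have hne : c j x ≠ x :=
      (hc j).apply_ne (Set.one_lt_ncard_iff_nontrivial_and_finite.1 (hp j).one_lt).1 hx
    have hmaps : Set.MapsTo (c j) (f j) (f j) := (hc j).1.mapsTo
    have itinerary_eq {y : V} (hy : y ∈ f j) : itinerary χ (c j) y = toLex fun _ => a :=
      congrArg toLex (funext fun t => ha _ (hmaps.iterate t hy))
    have not_lt {y z : V} (hy : y ∈ f j) (hz : z ∈ f j) :
        ¬ colorKey f c χ (fun j => itinerary χ (c j)) y <
          colorKey f c χ (fun j => itinerary χ (c j)) z := by
      rw [colorKey_lt_colorKey_iff_of_mem hT hf hy hz]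
      exact fun h => (itinerary_lt_itinerary_iff.2 h).ne
        ((itinerary_eq hy).trans (itinerary_eq hz).symm)
    exact (hinj.ne hne).lt_or_gt.elim (not_lt (hmaps hx) hx) (not_lt hx (hmaps hx))
  · intro hχ v w h
    refine gateKey_injective hT (fun j => ?_) (congrArg Prod.snd (toLex.injective h))
    exact (injOn_itinerary_of_prime_ncard (hc j) (hp j) (hχ j)).comp (c j).injective.injOn
      (hc j).1.mapsTo

end ColorKey

section Content

variable {A B : Type*}

/-- The coloring `χ` contributes to the coefficient of the monomial `d`: each color `j` is used
`d j` times. -/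
def HasContent (χ : A → ℕ) (d : ℕ →₀ ℕ) : Prop :=
  ∀ j, d j = Nat.card {v // χ v = j}

theorem hasContent_comp_equiv (e : A ≃ B) {χ : B → ℕ} {d : ℕ →₀ ℕ} :
    HasContent (χ ∘ e) d ↔ HasContent χ d :=
  forall_congr' fun _ => Eq.congr_right (Nat.card_congr (e.subtypeEquiv fun _ => .rfl))

theorem finite_setOf_hasContent [Finite A] (d : ℕ →₀ ℕ) : {χ : A → ℕ | HasContent χ d}.Finite := by
  refine (Set.Finite.pi' fun _ => d.support.finite_toSet).subset fun χ hχ v => ?_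
  rw [Finset.mem_coe, Finsupp.mem_support_iff, hχ]
  have : Nonempty {w // χ w = χ v} := ⟨v, rfl⟩
  exact Nat.card_pos.ne'

theorem coeff_chromSym [Fintype V] (d : ℕ →₀ ℕ) :
    MvPowerSeries.coeff d (chromSym E) =
      Nat.card {χ : V → ℕ // (∀ e ∈ E, ¬ ∃ a, ∀ v ∈ e, χ v = a) ∧ HasContent χ d} :=
  rfl

theorem coeff_funF {α : Type*} [LinearOrder α] {n : ℕ} {S : Set ℕ} {κ : A → α}
    (hκ : Function.Injective κ) (π : A ≃ Fin n)
    (hS : ∀ i (hi : i + 1 < n),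
      i ∈ S ↔ κ (π.symm ⟨i + 1, hi⟩) < κ (π.symm ⟨i, Nat.lt_of_succ_lt hi⟩)) (d : ℕ →₀ ℕ) :
    MvPowerSeries.coeff d (funF n S) =
      Nat.card {χ : A → ℕ // IsSortedBy π (fun v => toLex (χ v, κ v)) ∧ HasContent χ d} := by
  refine congrArg Nat.cast (Nat.card_congr
    ((π.arrowCongr (.refl ℕ)).subtypeEquiv fun χ => ?_)).symm
  refine and_congr (strictMono_fin_iff_lt_succ.trans (forall₂_congr fun i hi => ?_))
    (hasContent_comp_equiv π.symm).symm
  rw [hS i hi]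
  exact toLex_lt_toLex_iff_of_ne (hκ.ne (π.symm.injective.ne (by simp)))

theorem coeff_funF_DesH [Finite V] {k n : ℕ} {f : Fin k → Set V} {c : Fin k → Equiv.Perm V}
    (hT : IsHypertreeOn Set.univ (Set.range f)) (hf : Function.Injective f)
    (hc : ∀ j, (c j).IsCycleOn (f j)) (π : V ≃ Fin n) (d : ℕ →₀ ℕ) :
    MvPowerSeries.coeff d (funF n (DesH f c π)) =
      Nat.card {χ : V → ℕ //
        IsSortedBy π (colorKey f c χ fun j => itinerary χ (c j)) ∧ HasContent χ d} := by
  simp only [← isSortedBy_colorKey_iff hT hf hc]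
  exact coeff_funF (gateKey_injective hT fun j => (π.injective.comp (c j).injective).injOn) π
    (fun _ hi => mem_DesH_iff_gateKey_lt hT hf c π hi) d

end Content

theorem chromSym_hypertree_eq_sum_DesH_general [Fintype V] [DecidableEq V]
    (n : ℕ) (hn : Fintype.card V = n) (k : ℕ) (f : Fin k → Set V) (hinj : Function.Injective f)
    (hT : IsHypertreeOn Set.univ (Set.range f)) (hp : ∀ i, (f i).ncard.Prime)
    (c : Fin k → Equiv.Perm V) (hc : ∀ i, (c i).IsCycleOn (f i)) :
    chromSym (Set.range f) = ∑ π : V ≃ Fin n, funF n (DesH f c π) := by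
  ext d
  rw [map_sum, coeff_chromSym]
  simp only [coeff_funF_DesH hT hinj hc, Set.forall_mem_range]
  norm_cast
  refine card_subtype_and_eq_sum (finite_setOf_hasContent d) (fun χ => ?_)
    fun _ _ _ => IsSortedBy.eq
  rw [exists_isSortedBy_iff hn, injective_colorKey_itinerary_iff hT hinj hp hc]

/-- **Main theorem.** Let `H` be a hypertree with every edge of prime
size, with a fixed edge enumeration `f 0, …, f (k-1)` satisfying
`|(f 0 ∪ ⋯ ∪ f i) ∩ f (i+1)| = 1` and fixed cyclic permutations `c i` of each edge
`f i`. Then `X_H = Σ_{π} F_{Des_H(π)}`, the sum over all labelings `π : V ≃ Fin n`. -/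
theorem chromSym_hypertree_eq_sum_DesH {V : Type} [Fintype V] [DecidableEq V]
    (n : ℕ) (hn : Fintype.card V = n)
    (k : ℕ) (f : Fin k → Set V) (hinj : Function.Injective f)
    (hT : IsHypertreeOn Set.univ (Set.range f))
    (hp : ∀ i, ((f i).ncard).Prime)
    (hord : ∀ i : ℕ, ∀ hi : i + 1 < k,
      ((⋃ j ∈ {j : Fin k | (j : ℕ) ≤ i}, f j) ∩ f ⟨i + 1, hi⟩).ncard = 1)
    (c : Fin k → Equiv.Perm V)
    (hc : ∀ i, (c i).IsCycle ∧ ∀ x, c i x ≠ x ↔ x ∈ f i) :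
    chromSym (Set.range f) = ∑ π : V ≃ Fin n, funF n (DesH f c π) := by
  exact chromSym_hypertree_eq_sum_DesH_general n hn k f hinj hT hp c fun i =>
    Set.ext (hc i).2 ▸ (hc i).1.isCycleOn
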